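/- For |q|<1, R(q)^2/R(q^2) − R(q^2)/R(q)^2 + 1 = φ(−q)^2/φ(−q^5)^2, where R(q) = (q, q^4; q^5)_∞/(q^2, q^3; q^5)_∞ and φ(q) = ∑_{n∈ℤ} q^{n^2}. -/

import Mathlib

/-!
Write `A = (q, q⁴; q⁵)`, `B = (q², q³; q⁵)`, let `A'`, `B'` be the same products with all arguments
negated, and let `aⱼ = (qʲ, q¹⁰⁻ʲ; q¹⁰)`. Since `(x²; p²) = (x; p)(-x; p)`, the products `A(q²)` and
`B(q²)` are `a₂ = AA'` and `a₄ = BB'`, so that `R(q)²/R(q²) = AB'/(A'B)`. The claim becomes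
`A'B/(AB') - AB'/(A'B) = 1 - φ(-q)²/φ(-q⁵)²`.

By the Jacobi triple product (`jacobi_triple`), `A, A', B, B'` and the `aⱼ` are theta series up to
the factors `E₅ = (q⁵; q⁵)` and `E₁₀ = (q¹⁰; q¹⁰)`. Splitting the double series for `A'B` and `AB'`
according to the parity of `m + n` (`th_mul_even_odd`) gives
`E₅²(A'B + AB') = 2 a₃a₄ E₁₀²` and `E₅²(A'B - AB') = 2q a₁a₂ E₁₀²`,
whose product evaluates the left-hand side. For the right-hand side, splitting the double series of
`φ(-q)²` over the cosets of the sublattice `(2 + i)ℤ[i]` of index five (`theta_sq_sub`) gives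
`φ(-q)² = φ(-q⁵)² - 4q a₁a₃ E₁₀²`. The two evaluations agree because `a₁a₃A'B' = 1` and
`φ(-q⁵) = E₅²/E₁₀` (`final_algebra`).

To keep all exponents integral, theta series are written as `∑ wⁿ s^(n²)`, and `q = t²`; the case
`q = 0` is separate because the series involve negative powers.
-/

noncomputable def qp (a q : ℂ) : ℂ := ∏' k : ℕ, (1 - a * q ^ k)

noncomputable def GG (q : ℂ) : ℂ := 1 / (qp q (q ^ 5) * qp (q ^ 4) (q ^ 5))

noncomputable def HH (q : ℂ) : ℂ := 1 / (qp (q ^ 2) (q ^ 5) * qp (q ^ 3) (q ^ 5))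

noncomputable def RR (q : ℂ) : ℂ :=
  (qp q (q ^ 5) * qp (q ^ 4) (q ^ 5)) / (qp (q ^ 2) (q ^ 5) * qp (q ^ 3) (q ^ 5))

noncomputable def phi (q : ℂ) : ℂ := ∑' n : ℤ, q ^ (n.natAbs ^ 2)

noncomputable def psi (q : ℂ) : ℂ := ∑' n : ℕ, q ^ (n * (n + 1) / 2)

open Filter Topology Finset

/-! ### The infinite products -/

theorem qp_summable (a : ℂ) {p : ℂ} (hp : ‖p‖ < 1) : Summable fun k : ℕ => ‖-(a * p ^ k)‖ := by
  simp only [norm_neg, norm_mul, norm_pow]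
  exact (summable_geometric_of_lt_one (norm_nonneg _) hp).mul_left _

theorem qp_multipliable (a : ℂ) {p : ℂ} (hp : ‖p‖ < 1) :
    Multipliable fun k : ℕ => 1 - a * p ^ k := by
  simpa only [sub_eq_add_neg] using
    multipliable_one_add_of_summable (qp_summable a hp)

theorem qp_tendsto (a : ℂ) {p : ℂ} (hp : ‖p‖ < 1) :
    Tendsto (fun n : ℕ => ∏ k ∈ range n, (1 - a * p ^ k)) atTop (𝓝 (qp a p)) :=
  (qp_multipliable a hp).tendsto_prod_tprod_nat

theorem one_sub_mul_pow_ne_zero {a p : ℂ} (ha : ‖a‖ < 1) (hp : ‖p‖ < 1) (k : ℕ) :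
    1 - a * p ^ k ≠ 0 := by
  intro h
  have h1 : ‖a * p ^ k‖ = 1 := by rw [← sub_eq_zero.mp h, norm_one]
  rw [norm_mul, norm_pow] at h1
  have h2 : ‖p‖ ^ k ≤ 1 := pow_le_one₀ (norm_nonneg _) hp.le
  nlinarith [norm_nonneg a, norm_nonneg p]

theorem qp_ne_zero {a p : ℂ} (ha : ‖a‖ < 1) (hp : ‖p‖ < 1) : qp a p ≠ 0 := by
  have := tprod_one_add_ne_zero_of_summable (f := fun k : ℕ => -(a * p ^ k))
    (fun k => by simpa only [← sub_eq_add_neg] using one_sub_mul_pow_ne_zero ha hp k)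
    (qp_summable a hp)
  simpa only [← sub_eq_add_neg, qp] using this

/-- Splitting a product into its factors of even and of odd index. -/
theorem qp_even_odd (a : ℂ) {p : ℂ} (hp : ‖p‖ < 1) :
    qp a p = qp a (p ^ 2) * qp (a * p) (p ^ 2) := by
  have hp2 : ‖p ^ 2‖ < 1 := by
    rw [norm_pow]; exact pow_lt_one₀ (norm_nonneg _) hp (by norm_num)
  have h0 : (fun k : ℕ => 1 - a * p ^ (2 * k)) = fun k : ℕ => 1 - a * (p ^ 2) ^ k := by
    funext k; rw [pow_mul]
  have h1 : (fun k : ℕ => 1 - a * p ^ (2 * k + 1)) = fun k : ℕ => 1 - a * p * (p ^ 2) ^ k := by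
    funext k; rw [pow_succ, pow_mul]; ring
  have := tprod_even_mul_odd (f := fun k : ℕ => 1 - a * p ^ k)
    (by rw [h0]; exact qp_multipliable _ hp2) (by rw [h1]; exact qp_multipliable _ hp2)
  rw [h0, h1] at this
  exact this.symm

/-- The factorwise identity `1 - x² = (1 - x)(1 + x)`. -/
theorem qp_sq (a : ℂ) {p : ℂ} (hp : ‖p‖ < 1) :
    qp (a ^ 2) (p ^ 2) = qp a p * qp (-a) p := by
  unfold qp
  rw [← (qp_multipliable a hp).tprod_mul (qp_multipliable (-a) hp)]
  refine tprod_congr fun k => ?_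
  ring

/-! ### The Jacobi triple product -/

/-- The finite product `(p; p)_n`. -/
noncomputable def qfac (p : ℂ) (n : ℕ) : ℂ := ∏ k ∈ range n, (1 - p * p ^ k)

theorem qfac_succ (p : ℂ) (n : ℕ) : qfac p (n + 1) = qfac p n * (1 - p ^ (n + 1)) := by
  rw [qfac, prod_range_succ, pow_succ', qfac]

theorem qfac_ne_zero {p : ℂ} (hp : ‖p‖ < 1) (n : ℕ) : qfac p n ≠ 0 :=
  prod_ne_zero_iff.mpr fun k _ => one_sub_mul_pow_ne_zero hp hp k

/-- The Gaussian binomial coefficient as a ratio of `q`-factorials, extended by zero beyond the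
diagonal. -/
noncomputable def gbin (p : ℂ) (N j : ℕ) : ℂ :=
  if j ≤ N then qfac p N / (qfac p j * qfac p (N - j)) else 0

theorem gbin_zero {p : ℂ} (hp : ‖p‖ < 1) (N : ℕ) : gbin p N 0 = 1 := by
  have := qfac_ne_zero hp N
  simp_all [gbin, qfac]

theorem gbin_self {p : ℂ} (hp : ‖p‖ < 1) (N : ℕ) : gbin p N N = 1 := by
  have := qfac_ne_zero hp N
  simp_all [gbin, qfac]

theorem gbin_of_lt (p : ℂ) {N j : ℕ} (h : N < j) : gbin p N j = 0 := if_neg (by omega)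

/-- The Pascal rule for Gaussian binomial coefficients. -/
theorem gbin_pascal {p : ℂ} (hp : ‖p‖ < 1) {N j : ℕ} (h : j ≤ N) :
    gbin p (N + 1) (j + 1) = gbin p N (j + 1) + p ^ (N - j) * gbin p N j := by
  rcases h.eq_or_lt with rfl | h
  · rw [gbin_self hp, gbin_self hp, gbin_of_lt p (Nat.lt_succ_self _)]; simp
  · obtain ⟨d, rfl⟩ := Nat.exists_eq_add_of_lt h
    have e1 : j + d + 1 - j = d + 1 := by omega
    have e2 : j + d + 1 + 1 - (j + 1) = d + 1 := by omega
    have e3 : j + d + 1 - (j + 1) = d := by omega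
    rw [gbin, gbin, gbin, if_pos (by omega), if_pos (by omega), if_pos (by omega), e1, e2, e3]
    have n1 := qfac_ne_zero hp j
    have n2 := qfac_ne_zero hp d
    have n3 := qfac_ne_zero hp (j + 1)
    have n4 := qfac_ne_zero hp (d + 1)
    rw [qfac_succ] at n3 n4
    rw [qfac_succ p (j + d + 1), qfac_succ p j, qfac_succ p d]
    have m1 := right_ne_zero_of_mul n3
    have m2 := right_ne_zero_of_mul n4
    field_simp
    ring

/-- The `q`-binomial theorem, written with base `s²` so that the quadratic exponent is `j²`. -/
theorem q_binomial {s : ℂ} (hs : ‖s ^ 2‖ < 1) (y : ℂ) (N : ℕ) :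
    ∏ k ∈ range N, (1 + y * s ^ (2 * k + 1)) =
      ∑ j ∈ range (N + 1), s ^ (j ^ 2) * gbin (s ^ 2) N j * y ^ j := by
  induction N with
  | zero => simp [gbin_zero hs]
  | succ N ih =>
    rw [prod_range_succ, ih, mul_add, mul_one, sum_range_succ' _ (N + 1)]
    have h1 : ∑ j ∈ range (N + 1), s ^ (j ^ 2) * gbin (s ^ 2) N j * y ^ j =
        ∑ j ∈ range (N + 1), s ^ ((j + 1) ^ 2) * gbin (s ^ 2) N (j + 1) * y ^ (j + 1) + 1 := by
      have := sum_range_succ (fun j => s ^ (j ^ 2) * gbin (s ^ 2) N j * y ^ j) (N + 1)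
      rw [gbin_of_lt _ (Nat.lt_succ_self N), mul_zero, zero_mul, add_zero] at this
      rw [← this, sum_range_succ']
      simp [gbin_zero hs]
    have h2 : (∑ j ∈ range (N + 1), s ^ (j ^ 2) * gbin (s ^ 2) N j * y ^ j) *
        (y * s ^ (2 * N + 1)) = ∑ j ∈ range (N + 1),
          s ^ ((j + 1) ^ 2) * ((s ^ 2) ^ (N - j) * gbin (s ^ 2) N j) * y ^ (j + 1) := by
      rw [sum_mul]
      refine sum_congr rfl fun j hj => ?_
      obtain ⟨d, rfl⟩ := Nat.exists_eq_add_of_le (Nat.lt_succ_iff.mp (mem_range.mp hj))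
      rw [Nat.add_sub_cancel_left]
      ring
    rw [h2, h1, add_right_comm, ← sum_add_distrib]
    congr 1
    · refine sum_congr rfl fun j hj => ?_
      rw [gbin_pascal hs (Nat.lt_succ_iff.mp (mem_range.mp hj))]
      ring
    · simp [gbin_zero hs]

/-- Inverting the factors with negative powers of `s` that come from recentring. -/
theorem prod_negative_half {s w : ℂ} (hs : s ≠ 0) (hw : w ≠ 0) (n : ℕ) :
    ∏ k ∈ range n, (1 - w * (s ^ (2 * k + 1))⁻¹) =
      (-w) ^ n * (s ^ (n ^ 2))⁻¹ * ∏ k ∈ range n, (1 - w⁻¹ * s ^ (2 * k + 1)) := by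
  induction n with
  | zero => simp
  | succ n ih =>
    rw [prod_range_succ, ih, prod_range_succ]
    have e : s ^ ((n + 1) ^ 2) = s ^ (n ^ 2) * s ^ (2 * n + 1) := by ring
    have h1 : s ^ (n ^ 2) ≠ 0 := pow_ne_zero _ hs
    have h2 : s ^ (2 * n + 1) ≠ 0 := pow_ne_zero _ hs
    rw [e]
    generalize s ^ (2 * n + 1) = A at *
    generalize s ^ (n ^ 2) = B at *
    generalize ∏ k ∈ range n, (1 - w⁻¹ * s ^ (2 * k + 1)) = C at *
    rw [pow_succ]
    field_simp
    ring

/-- The finite Jacobi triple product: the `q`-binomial theorem for `2n` factors, recentred. -/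
theorem finite_triple {s w : ℂ} (hs : s ≠ 0) (hs1 : ‖s ^ 2‖ < 1) (hw : w ≠ 0) (n : ℕ) :
    (∏ k ∈ range n, (1 - w * s * (s ^ 2) ^ k)) * ∏ k ∈ range n, (1 - w⁻¹ * s * (s ^ 2) ^ k) =
      ∑ i ∈ Icc (-n : ℤ) n, (-w) ^ i * s ^ (i ^ 2) * gbin (s ^ 2) (2 * n) (n + i).toNat := by
  have hb := q_binomial hs1 (-w * (s ^ (2 * n))⁻¹) (2 * n)
  rw [two_mul, prod_range_add, ← prod_range_reflect, ← two_mul] at hb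
  have e1 : ∏ k ∈ range n, (1 + -w * (s ^ (2 * n))⁻¹ * s ^ (2 * (n - 1 - k) + 1)) =
      ∏ k ∈ range n, (1 - w * (s ^ (2 * k + 1))⁻¹) := by
    refine prod_congr rfl fun k hk => ?_
    have hk := mem_range.mp hk
    have : s ^ (2 * n) = s ^ (2 * (n - 1 - k) + 1) * s ^ (2 * k + 1) := by
      rw [← pow_add]; congr 1; omega
    rw [this]
    have h1 : s ^ (2 * (n - 1 - k) + 1) ≠ 0 := pow_ne_zero _ hs
    have h2 : s ^ (2 * k + 1) ≠ 0 := pow_ne_zero _ hs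
    field_simp
    ring
  have e2 : ∏ k ∈ range n, (1 + -w * (s ^ (2 * n))⁻¹ * s ^ (2 * (n + k) + 1)) =
      ∏ k ∈ range n, (1 - w * s * (s ^ 2) ^ k) := by
    refine prod_congr rfl fun k hk => ?_
    have h1 : s ^ (2 * n) ≠ 0 := pow_ne_zero _ hs
    rw [mul_add, add_assoc, pow_add]
    field_simp
    ring
  have e3 : ∏ k ∈ range n, (1 - w⁻¹ * s * (s ^ 2) ^ k) =
      ∏ k ∈ range n, (1 - w⁻¹ * s ^ (2 * k + 1)) := prod_congr rfl fun k _ => by ring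
  rw [e1, e2, prod_negative_half hs hw, ← e3] at hb
  have hw' : -w ≠ 0 := neg_ne_zero.mpr hw
  have hpre : (-w) ^ n * (s ^ (n ^ 2))⁻¹ ≠ 0 :=
    mul_ne_zero (pow_ne_zero _ hw') (inv_ne_zero (pow_ne_zero _ hs))
  refine mul_left_cancel₀ hpre ?_
  rw [mul_comm (∏ k ∈ range n, (1 - w * s * (s ^ 2) ^ k)), ← mul_assoc, hb, mul_sum]
  refine sum_bij' (fun j _ => (j : ℤ) - n) (fun i _ => (n + i).toNat) ?_ ?_ ?_ ?_ ?_
  · intro j hj; rw [mem_Icc]; rw [mem_range] at hj; omega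
  · intro j hj; rw [mem_range]; rw [mem_Icc] at hj; omega
  · intro j hj; rw [mem_range] at hj; omega
  · intro j hj; rw [mem_Icc] at hj; omega
  · intro j hj
    have t : ((n : ℤ) + (j - n)).toNat = j := by omega
    rw [t]
    -- `j² - 2nj = (j - n)² - n²`
    have hz : s ^ (j ^ 2) * ((s ^ (2 * n))⁻¹) ^ j = (s ^ (n ^ 2))⁻¹ * s ^ (((j : ℤ) - n) ^ 2) := by
      rw [← zpow_natCast, ← zpow_natCast, ← zpow_natCast, ← zpow_natCast, ← zpow_neg, ← zpow_neg,
        ← zpow_mul, ← zpow_add₀ hs, ← zpow_add₀ hs]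
      congr 1; push_cast; ring
    have hz2 : (-w) ^ j = (-w) ^ n * (-w) ^ ((j : ℤ) - n) := by
      rw [← zpow_natCast, ← zpow_natCast, ← zpow_add₀ hw']
      congr 1; ring
    rw [mul_pow]
    calc _ = s ^ (j ^ 2) * ((s ^ (2 * n))⁻¹) ^ j * (-w) ^ j * gbin (s ^ 2) (2 * n) j := by ring
      _ = _ := by rw [hz, hz2]; ring

theorem gbin_bounded {p : ℂ} (hp : ‖p‖ < 1) : ∃ C, ∀ N j, ‖gbin p N j‖ ≤ C := by
  have ht : Tendsto (qfac p) atTop (𝓝 (qp p p)) := qp_tendsto p hp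
  obtain ⟨C, hC⟩ := (Metric.isBounded_range_of_tendsto _ ht).exists_norm_le
  obtain ⟨D, hD⟩ := (Metric.isBounded_range_of_tendsto _
    (ht.inv₀ (qp_ne_zero hp hp))).exists_norm_le
  have hC' : ∀ n, ‖qfac p n‖ ≤ C := fun n => hC _ ⟨n, rfl⟩
  have hD' : ∀ n, ‖(qfac p n)⁻¹‖ ≤ D := fun n => hD _ ⟨n, rfl⟩
  have hC0 : 0 ≤ C := (norm_nonneg _).trans (hC' 0)
  have hD0 : 0 ≤ D := (norm_nonneg _).trans (hD' 0)
  refine ⟨C * (D * D), fun N j => ?_⟩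
  unfold gbin
  split_ifs
  · rw [div_eq_mul_inv, mul_inv, norm_mul, norm_mul]
    have := hC' N
    have := hD' j
    have := hD' (N - j)
    gcongr
  · rw [norm_zero]; positivity

theorem gbin_tendsto {p : ℂ} (hp : ‖p‖ < 1) (i : ℤ) :
    Tendsto (fun n : ℕ => gbin p (2 * n) (n + i).toNat) atTop (𝓝 (qp p p)⁻¹) := by
  have ht : Tendsto (qfac p) atTop (𝓝 (qp p p)) := qp_tendsto p hp
  have h0 := qp_ne_zero hp hp
  have t1 : Tendsto (fun n : ℕ => 2 * n) atTop atTop :=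
    tendsto_atTop_mono (fun n => Nat.le_mul_of_pos_left n two_pos) tendsto_id
  have t2 : ∀ i : ℤ, Tendsto (fun n : ℕ => ((n : ℤ) + i).toNat) atTop atTop := fun i => by
    refine tendsto_atTop.mpr fun b => ?_
    filter_upwards [eventually_ge_atTop (b + i.natAbs)] with n hn
    omega
  have := (ht.comp t1).div ((ht.comp (t2 i)).mul (ht.comp (t2 (-i)))) (mul_ne_zero h0 h0)
  have e : qp p p / (qp p p * qp p p) = (qp p p)⁻¹ := by field_simp
  rw [e] at this
  refine this.congr' ?_
  filter_upwards [eventually_ge_atTop i.natAbs] with n hn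
  have e1 : 2 * n - ((n : ℤ) + i).toNat = ((n : ℤ) + -i).toNat := by omega
  simp only [gbin, Function.comp_apply, Pi.div_apply]
  rw [if_pos (by omega), e1]

/-- The theta series `∑ wⁿ s^(n²)` over the integers. -/
noncomputable def th (w s : ℂ) : ℂ := ∑' n : ℤ, w ^ n * s ^ (n ^ 2)

theorem th_summable {s w : ℂ} (hs : s ≠ 0) (hs1 : ‖s‖ < 1) (hw : w ≠ 0) :
    Summable fun n : ℤ => w ^ n * s ^ (n ^ 2) := by
  have hpi : (Real.pi : ℂ) ≠ 0 := by exact_mod_cast Real.pi_ne_zero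
  have hτ : 0 < (Complex.log s / (Real.pi * Complex.I)).im := by
    have : Complex.log s / (Real.pi * Complex.I) =
        ((1 / Real.pi : ℝ) : ℂ) * (-Complex.I * Complex.log s) := by
      push_cast
      field_simp
      rw [Complex.I_sq]; ring
    rw [this, Complex.im_ofReal_mul]
    have : (-Complex.I * Complex.log s).im = - Real.log ‖s‖ := by
      simp [Complex.log_re]
    rw [this]
    have := Real.log_neg (norm_pos_iff.mpr hs) hs1
    have := Real.pi_pos
    apply mul_pos <;> [positivity; linarith]
  have := (summable_jacobiTheta₂_term_iff (Complex.log w / (2 * Real.pi * Complex.I)) _).mpr hτ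
  refine this.congr fun n => ?_
  rw [jacobiTheta₂_term, Complex.exp_add]
  congr 1
  · rw [show 2 * (Real.pi : ℂ) * Complex.I * n * (Complex.log w / (2 * Real.pi * Complex.I)) =
      n * Complex.log w by field_simp, Complex.exp_int_mul, Complex.exp_log hw]
  · rw [show (Real.pi : ℂ) * Complex.I * n ^ 2 * (Complex.log s / (Real.pi * Complex.I)) =
      ((n ^ 2 : ℤ) : ℂ) * Complex.log s by push_cast; field_simp, Complex.exp_int_mul,
      Complex.exp_log hs]

/-- The Jacobi triple product. It is the limit of `finite_triple`, taken termwise by dominated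
convergence: the Gaussian binomials are bounded and tend to `1 / (s²; s²)_∞`. -/
theorem jacobi_triple {s w : ℂ} (hs : s ≠ 0) (hs1 : ‖s‖ < 1) (hw : w ≠ 0) :
    th (-w) s = qp (w * s) (s ^ 2) * qp (w⁻¹ * s) (s ^ 2) * qp (s ^ 2) (s ^ 2) := by
  have hs2 : ‖s ^ 2‖ < 1 := by
    rw [norm_pow]; exact pow_lt_one₀ (norm_nonneg _) hs1 (by norm_num)
  obtain ⟨C, hC⟩ := gbin_bounded hs2
  have hsum := th_summable hs hs1 (neg_ne_zero.mpr hw)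
  have h1 : Tendsto (fun n : ℕ => ∑' i : ℤ, if i ∈ Icc (-n : ℤ) n then
      (-w) ^ i * s ^ (i ^ 2) * gbin (s ^ 2) (2 * n) (n + i).toNat else 0) atTop
      (𝓝 (∑' i : ℤ, (-w) ^ i * s ^ (i ^ 2) * (qp (s ^ 2) (s ^ 2))⁻¹)) := by
    refine tendsto_tsum_of_dominated_convergence
      (bound := fun i : ℤ => ‖(-w) ^ i * s ^ (i ^ 2)‖ * C) (hsum.norm.mul_right C) ?_ ?_
    · intro i
      refine ((gbin_tendsto hs2 i).const_mul _).congr' ?_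
      filter_upwards [eventually_ge_atTop i.natAbs] with n hn
      rw [if_pos (by rw [mem_Icc]; omega)]
    · refine Eventually.of_forall fun n i => ?_
      split_ifs
      · rw [norm_mul]; gcongr; exact hC _ _
      · rw [norm_zero]
        exact mul_nonneg (norm_nonneg _) ((norm_nonneg _).trans (hC 0 0))
  have h2 := (qp_tendsto (w * s) hs2).mul (qp_tendsto (w⁻¹ * s) hs2)
  have h3 := tendsto_nhds_unique h2 (h1.congr fun n => by
    rw [finite_triple hs hs2 hw n, tsum_eq_sum (s := Icc (-n : ℤ) n)
      (fun i hi => if_neg hi)]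
    exact sum_congr rfl fun i hi => if_pos hi)
  rw [h3, tsum_mul_right, th, mul_assoc, inv_mul_cancel₀ (qp_ne_zero hs2 hs2), mul_one]

/-! ### Products of two theta series -/

theorem th_inv (w s : ℂ) : th w⁻¹ s = th w s := by
  rw [th, th, ← (Equiv.neg ℤ).tsum_eq]
  refine tsum_congr fun n => ?_
  simp

/-- The summand of the double series for `th w s * th v s`. -/
noncomputable def th2 (w v s : ℂ) (x : ℤ × ℤ) : ℂ :=
  w ^ x.1 * s ^ (x.1 ^ 2) * (v ^ x.2 * s ^ (x.2 ^ 2))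

theorem th2_summable {w v s : ℂ} (hs : s ≠ 0) (hs1 : ‖s‖ < 1) (hw : w ≠ 0) (hv : v ≠ 0) :
    Summable (th2 w v s) := by
  have h := summable_mul_of_summable_norm (f := fun n : ℤ => w ^ n * s ^ (n ^ 2))
    (g := fun n : ℤ => v ^ n * s ^ (n ^ 2)) (th_summable hs hs1 hw).norm
    (th_summable hs hs1 hv).norm
  exact h

theorem th_mul_th {w v s : ℂ} (hs : s ≠ 0) (hs1 : ‖s‖ < 1) (hw : w ≠ 0) (hv : v ≠ 0) :
    th w s * th v s = ∑' x, th2 w v s x :=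
  tsum_mul_tsum_of_summable_norm (th_summable hs hs1 hw).norm (th_summable hs hs1 hv).norm

/-- A double series split over the `k` cosets of a sublattice of `ℤ²`, the map `e` parametrising
each coset by `ℤ²`. -/
theorem tsum_cosets {F : ℤ × ℤ → ℂ} (hF : Summable F) {k : ℕ} {e : Fin k × (ℤ × ℤ) → ℤ × ℤ}
    (he : Function.Bijective e) : ∑' x, F x = ∑ j, ∑' y, F (e (j, y)) := by
  have h1 : Summable fun z => F (e z) := hF.comp_injective he.1
  rw [← (Equiv.ofBijective e he).tsum_eq, ← tsum_fintype (L := .unconditional _)]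
  exact h1.tsum_prod

/-- The two cosets of the sublattice `{m ≡ n mod 2}` of `ℤ²`, with representatives `(0, 0)` and
`(1, 0)`. -/
def evenOdd (z : Fin 2 × (ℤ × ℤ)) : ℤ × ℤ := (z.2.1 + z.2.2 + z.1.val, z.2.1 - z.2.2)

theorem evenOdd_bijective : Function.Bijective evenOdd := by
  constructor
  · rintro ⟨i, a, b⟩ ⟨j, c, d⟩ h
    simp only [evenOdd, Prod.mk.injEq] at h
    have : i = j := by apply Fin.ext; omega
    subst this
    simp only [Prod.mk.injEq, true_and]
    omega
  · rintro ⟨x, y⟩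
    refine ⟨(⟨((x + y) % 2).toNat, by omega⟩, ((x + y) / 2, (x + y) / 2 - y)), ?_⟩
    simp only [evenOdd, Prod.mk.injEq]
    omega

/-- Even and odd parts: `m = a + b`, `n = a - b` and `m = a + b + 1`, `n = a - b`. -/
theorem th_mul_even_odd {w v s : ℂ} (hs : s ≠ 0) (hs1 : ‖s‖ < 1) (hw : w ≠ 0) (hv : v ≠ 0) :
    th w s * th v s = th (w * v) (s ^ 2) * th (w / v) (s ^ 2) +
      w * s * (th (w * v * s ^ 2) (s ^ 2) * th (w / v * s ^ 2) (s ^ 2)) := by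
  have hs2 : s ^ 2 ≠ 0 := pow_ne_zero _ hs
  have hs21 : ‖s ^ 2‖ < 1 := by
    rw [norm_pow]; exact pow_lt_one₀ (norm_nonneg _) hs1 (by norm_num)
  have h1 : w * v ≠ 0 := mul_ne_zero hw hv
  have h2 : w / v ≠ 0 := div_ne_zero hw hv
  rw [th_mul_th hs hs1 hw hv, tsum_cosets (th2_summable hs hs1 hw hv) evenOdd_bijective,
    Fin.sum_univ_two, th_mul_th hs2 hs21 h1 h2,
    th_mul_th hs2 hs21 (mul_ne_zero h1 hs2) (mul_ne_zero h2 hs2), ← tsum_mul_left]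
  congr 1
  · refine tsum_congr fun ⟨a, b⟩ => ?_
    simp only [evenOdd, th2, Fin.val_zero, Nat.cast_zero]
    have e1 : (s ^ 2) ^ (a ^ 2) * (s ^ 2) ^ (b ^ 2) = s ^ ((a + b) ^ 2) * s ^ ((a - b) ^ 2) := by
      rw [← zpow_add₀ hs2, ← zpow_add₀ hs, ← zpow_natCast, ← zpow_mul]
      congr 1; push_cast; ring
    rw [add_zero, mul_zpow, div_zpow, zpow_add₀ hw, zpow_sub₀ hv]
    have := zpow_ne_zero b hv
    calc _ = w ^ a * w ^ b * (v ^ a / v ^ b) * (s ^ ((a + b) ^ 2) * s ^ ((a - b) ^ 2)) := by ring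
      _ = _ := by rw [← e1]; ring
  · refine tsum_congr fun ⟨a, b⟩ => ?_
    simp only [evenOdd, th2, Fin.val_one, Nat.cast_one]
    have e1 : s * ((s ^ 2) ^ a * (s ^ 2) ^ b * ((s ^ 2) ^ (a ^ 2) * (s ^ 2) ^ (b ^ 2))) =
        s ^ ((a + b + 1) ^ 2) * s ^ ((a - b) ^ 2) := by
      rw [← zpow_add₀ hs2, ← zpow_add₀ hs2, ← zpow_add₀ hs2, ← zpow_add₀ hs, ← zpow_natCast,
        ← zpow_mul, ← zpow_one_add₀ hs]
      congr 1; push_cast; ring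
    rw [mul_zpow, mul_zpow, mul_zpow, div_zpow, zpow_add₀ hw, zpow_add₀ hw, zpow_sub₀ hv, zpow_one]
    calc _ = w ^ a * w ^ b * w * (v ^ a / v ^ b) *
          (s ^ ((a + b + 1) ^ 2) * s ^ ((a - b) ^ 2)) := by ring
      _ = _ := by rw [← e1]; ring

/-- The five cosets of the sublattice `(2 + i)ℤ[i]` of `ℤ[i]`, with representatives `0` and the
four units `1, i, -1, -i`. -/
def gaussCosets (z : Fin 5 × (ℤ × ℤ)) : ℤ × ℤ :=
  (2 * z.2.1 - z.2.2 + ![0, 1, 0, -1, 0] z.1, z.2.1 + 2 * z.2.2 + ![0, 0, 1, 0, -1] z.1)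

theorem gaussCosets_bijective : Function.Bijective gaussCosets := by
  constructor
  · rintro ⟨i, a, b⟩ ⟨j, c, d⟩ h
    simp only [gaussCosets, Prod.mk.injEq] at h
    fin_cases i <;> fin_cases j <;> simp at h ⊢ <;> omega
  · rintro ⟨x, y⟩
    -- the residue of `x - 2y` modulo `5` determines the coset
    have h : (x - 2 * y) % 5 = 0 ∨ (x - 2 * y) % 5 = 1 ∨ (x - 2 * y) % 5 = 3 ∨
      (x - 2 * y) % 5 = 4 ∨ (x - 2 * y) % 5 = 2 := by omega
    rcases h with h | h | h | h | h
    · refine ⟨(0, ((2 * x + y) / 5, (2 * y - x) / 5)), ?_⟩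
      simp [gaussCosets]; omega
    · refine ⟨(1, ((2 * (x - 1) + y) / 5, (2 * y - (x - 1)) / 5)), ?_⟩
      simp [gaussCosets]; omega
    · refine ⟨(2, ((2 * x + (y - 1)) / 5, (2 * (y - 1) - x) / 5)), ?_⟩
      simp [gaussCosets]; omega
    · refine ⟨(3, ((2 * (x + 1) + y) / 5, (2 * y - (x + 1)) / 5)), ?_⟩
      simp [gaussCosets]; omega
    · refine ⟨(4, ((2 * x + (y + 1)) / 5, (2 * (y + 1) - x) / 5)), ?_⟩
      simp [gaussCosets]; omega

theorem neg_one_zpow_congr {a b : ℤ} (h : a % 2 = b % 2) : (-1 : ℂ) ^ a = (-1) ^ b := by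
  have : Even (a - b) := Int.even_iff.mpr (by omega)
  rw [show a = a - b + b by ring, zpow_add₀ (by norm_num), this.neg_one_zpow, one_mul]

/-- One coset `(2m - n + c, m + 2n + d)` contributes a product of two theta series. -/
theorem coset_sum {q : ℂ} (hq : q ≠ 0) (hq1 : ‖q‖ < 1) (c d : ℤ) :
    ∑' y : ℤ × ℤ, th2 (-1) (-1) q (2 * y.1 - y.2 + c, y.1 + 2 * y.2 + d) =
      (-1) ^ (c + d) * q ^ (c ^ 2 + d ^ 2) *
        (th (-q ^ (4 * c + 2 * d)) (q ^ 5) * th (-q ^ (4 * d - 2 * c)) (q ^ 5)) := by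
  have hq5 : q ^ 5 ≠ 0 := pow_ne_zero _ hq
  have hq51 : ‖q ^ 5‖ < 1 := by
    rw [norm_pow]; exact pow_lt_one₀ (norm_nonneg _) hq1 (by norm_num)
  rw [th_mul_th hq5 hq51 (neg_ne_zero.mpr (zpow_ne_zero _ hq))
    (neg_ne_zero.mpr (zpow_ne_zero _ hq)), ← tsum_mul_left]
  refine tsum_congr fun ⟨m, n⟩ => ?_
  simp only [th2]
  have e1 : q ^ ((2 * m - n + c) ^ 2) * q ^ ((m + 2 * n + d) ^ 2) =
      q ^ (c ^ 2 + d ^ 2) * ((q ^ (4 * c + 2 * d)) ^ m * (q ^ 5) ^ (m ^ 2) *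
        ((q ^ (4 * d - 2 * c)) ^ n * (q ^ 5) ^ (n ^ 2))) := by
    rw [← zpow_natCast]
    simp only [← zpow_mul, ← zpow_add₀ hq]
    congr 1; push_cast; ring
  have e2 : (-1 : ℂ) ^ (2 * m - n + c) * (-1) ^ (m + 2 * n + d) =
      (-1) ^ (c + d) * ((-1) ^ m * (-1) ^ n) := by
    simp only [← zpow_add₀ (neg_ne_zero.mpr one_ne_zero : (-1 : ℂ) ≠ 0)]
    exact neg_one_zpow_congr (by omega)
  rw [neg_eq_neg_one_mul (q ^ (4 * c + 2 * d)), neg_eq_neg_one_mul (q ^ (4 * d - 2 * c)),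
    mul_zpow, mul_zpow]
  calc _ = ((-1 : ℂ) ^ (2 * m - n + c) * (-1) ^ (m + 2 * n + d)) *
        (q ^ ((2 * m - n + c) ^ 2) * q ^ ((m + 2 * n + d) ^ 2)) := by ring
    _ = _ := by rw [e1, e2]; ring

/-- Ramanujan's `φ(-q)² - φ(-q⁵)² = -4q f(-q, -q⁹) f(-q³, -q⁷)`. The sublattice `(2 + i)ℤ[i]`
contributes `φ(-q⁵)²`, and multiplication by `i` permutes the other four cosets cyclically. -/
theorem theta_sq_sub {q : ℂ} (hq : q ≠ 0) (hq1 : ‖q‖ < 1) :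
    th (-1) q ^ 2 = th (-1) (q ^ 5) ^ 2 - 4 * q * (th (-q ^ 4) (q ^ 5) * th (-q ^ 2) (q ^ 5)) := by
  have h1 : (-1 : ℂ) ≠ 0 := by norm_num
  have i4 : th (-(q ^ 4)⁻¹) (q ^ 5) = th (-q ^ 4) (q ^ 5) := by rw [← th_inv (-q ^ 4), inv_neg]
  have i2 : th (-(q ^ 2)⁻¹) (q ^ 5) = th (-q ^ 2) (q ^ 5) := by rw [← th_inv (-q ^ 2), inv_neg]
  have g0 : ∀ y, gaussCosets (0, y) = (2 * y.1 - y.2 + 0, y.1 + 2 * y.2 + 0) := fun _ => rfl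
  have g1 : ∀ y, gaussCosets (1, y) = (2 * y.1 - y.2 + 1, y.1 + 2 * y.2 + 0) := fun _ => rfl
  have g2 : ∀ y, gaussCosets (2, y) = (2 * y.1 - y.2 + 0, y.1 + 2 * y.2 + 1) := fun _ => rfl
  have g3 : ∀ y, gaussCosets (3, y) = (2 * y.1 - y.2 + -1, y.1 + 2 * y.2 + 0) := fun _ => rfl
  have g4 : ∀ y, gaussCosets (4, y) = (2 * y.1 - y.2 + 0, y.1 + 2 * y.2 + -1) := fun _ => rfl
  rw [sq, th_mul_th hq hq1 h1 h1, tsum_cosets (th2_summable hq hq1 h1 h1) gaussCosets_bijective,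
    Fin.sum_univ_five]
  simp only [g0, g1, g2, g3, g4, coset_sum hq hq1]
  norm_num [zpow_neg]
  norm_cast
  rw [i2, i4]
  ring

/-! ### The identity -/

theorem phi_eq_th (q : ℂ) : phi (-q) = th (-1) q := by
  unfold phi th
  refine tsum_congr fun n => ?_
  have h1 : (n.natAbs : ℤ) ^ 2 = n ^ 2 := Int.natAbs_sq n
  have h2 : q ^ (n ^ 2) = q ^ (n.natAbs ^ 2) := by
    rw [← h1, ← zpow_natCast]; push_cast; rfl
  have h3 : (-1 : ℂ) ^ n = (-1) ^ (n.natAbs ^ 2) := by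
    rw [← zpow_natCast]
    refine neg_one_zpow_congr ?_
    push_cast
    rw [sq_abs, sq, Int.mul_emod]
    rcases Int.emod_two_eq n with h | h <;> rw [h] <;> rfl
  rw [h2, h3, ← mul_pow]
  ring

/-- The triple product in terms of its two parameters `x = -ws` and `y = -s/w` and its base
`p = s²`. -/
theorem triple_of_eq {s w x y p : ℂ} (hs : s ≠ 0) (hs1 : ‖s‖ < 1) (hw : w ≠ 0)
    (hx : -w * s = x) (hy : s = -w * y) (hp : s ^ 2 = p) :
    th w s = qp x p * qp y p * qp p p := by
  have h := jacobi_triple hs hs1 (neg_ne_zero.mpr hw)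
  have hy' : (-w)⁻¹ * s = y := by
    rw [hy, ← mul_assoc, inv_mul_cancel₀ (neg_ne_zero.mpr hw), one_mul]
  rwa [neg_neg, hx, hy', hp] at h

/-- The algebraic elimination: `hA`-`h4` are the product relations, `hp` and `hm` the even and odd
parts, and `f1`, `f5` stand for `φ(-q)`, `φ(-q⁵)`. -/
theorem final_algebra {a1 a2 a3 a4 A A' B B' e5 e10 f1 f5 q : ℂ}
    (hA : A = a1 * a4) (hB : B = a2 * a3) (h2 : a2 = A * A') (h4 : a4 = B * B')
    (hp : e5 * e5 * (A' * B + A * B') = 2 * (e10 * e10) * (a3 * a4))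
    (hm : e5 * e5 * (A' * B - A * B') = 2 * q * (e10 * e10) * (a1 * a2))
    (hf : f1 ^ 2 = f5 ^ 2 - 4 * q * (a1 * a3 * (e10 * e10)))
    (hf5 : f5 * e10 = e5 ^ 2)
    (ha2 : a2 ≠ 0) (ha4 : a4 ≠ 0) (he5 : e5 ≠ 0) :
    (A / B) ^ 2 / (a2 / a4) - (a2 / a4) / (A / B) ^ 2 + 1 = f1 ^ 2 / f5 ^ 2 := by
  have nA : A ≠ 0 := left_ne_zero_of_mul (h2 ▸ ha2)
  have nA' : A' ≠ 0 := right_ne_zero_of_mul (h2 ▸ ha2)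
  have nB : B ≠ 0 := left_ne_zero_of_mul (h4 ▸ ha4)
  have nB' : B' ≠ 0 := right_ne_zero_of_mul (h4 ▸ ha4)
  have nf5 : f5 ≠ 0 := left_ne_zero_of_mul (hf5 ▸ pow_ne_zero 2 he5)
  -- `a₁a₃ = AB / (a₂a₄) = 1 / (A'B')`
  have h13 : a1 * a3 * (A' * B') = 1 := by
    have : A * B ≠ 0 := mul_ne_zero nA nB
    refine mul_left_cancel₀ this ?_
    calc A * B * (a1 * a3 * (A' * B')) = a1 * a3 * ((A * A') * (B * B')) := by ring
      _ = (a1 * a4) * (a2 * a3) := by rw [← h2, ← h4]; ring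
      _ = A * B * 1 := by rw [← hA, ← hB]; ring
  have hprod : e5 ^ 4 * ((A' * B) ^ 2 - (A * B') ^ 2) = 4 * q * e10 ^ 4 * (A * B) := by
    calc _ = (e5 * e5 * (A' * B + A * B')) * (e5 * e5 * (A' * B - A * B')) := by ring
      _ = 4 * q * e10 ^ 4 * ((a1 * a4) * (a2 * a3)) := by rw [hp, hm]; ring
      _ = _ := by rw [← hA, ← hB]
  have hu : (A / B) ^ 2 / (a2 / a4) = (A * B') / (A' * B) := by
    rw [h2, h4]; field_simp
  have hu' : (a2 / a4) / (A / B) ^ 2 = (A' * B) / (A * B') := by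
    rw [h2, h4]; field_simp
  have hdiff : (A' * B) / (A * B') - (A * B') / (A' * B) = 4 * q * (a1 * a3) * e10 ^ 4 / e5 ^ 4 := by
    rw [div_sub_div _ _ (mul_ne_zero nA nB') (mul_ne_zero nA' nB),
      div_eq_div_iff (by positivity) (by positivity)]
    linear_combination hprod - 4 * q * e10 ^ 4 * A * B * h13
  have hr : f1 ^ 2 / f5 ^ 2 = 1 - 4 * q * (a1 * a3) * e10 ^ 4 / e5 ^ 4 := by
    have : e5 ^ 4 = f5 ^ 2 * e10 ^ 2 := by rw [← mul_pow, hf5]; ring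
    rw [hf, this]
    field_simp
  rw [hu, hu', hr, ← hdiff]
  ring

theorem stmt10 (q : ℂ) (hq : ‖q‖ < 1) :
    RR q ^ 2 / RR (q ^ 2) - RR (q ^ 2) / RR q ^ 2 + 1 =
      phi (-q) ^ 2 / phi (-(q ^ 5)) ^ 2 := by
  rcases eq_or_ne q 0 with rfl | hq0
  · have h0 : phi 0 = 1 := by
      unfold phi
      rw [tsum_eq_single 0 fun n hn => zero_pow (by simpa using hn)]
      simp
    simp [RR, qp, h0]
  obtain ⟨t, rfl⟩ : ∃ t : ℂ, q = t ^ 2 := ⟨q ^ (1 / 2 : ℂ), by simp [← Complex.cpow_nat_mul]⟩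
  have ht0 : t ≠ 0 := fun h => hq0 (by rw [h]; simp)
  have ht1 : ‖t‖ < 1 := by
    rw [norm_pow] at hq
    exact (pow_lt_one_iff_of_nonneg (norm_nonneg _) two_ne_zero).mp hq
  have hn : ∀ k : ℕ, k ≠ 0 → ‖t ^ k‖ < 1 := fun k hk => by
    rw [norm_pow]; exact pow_lt_one₀ (norm_nonneg _) ht1 hk
  have hz : ∀ k : ℕ, t ^ k ≠ 0 := fun k => pow_ne_zero _ ht0
  have n5 := hn 5 (by norm_num)
  have n10 := hn 10 (by norm_num)
  have n20 := hn 20 (by norm_num)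
  -- theta series of nome `t⁵`, i.e. products of base `q⁵`
  have tA : th (-(t ^ 3)⁻¹) (t ^ 5) = qp (t ^ 2) (t ^ 10) * qp (t ^ 8) (t ^ 10) *
      qp (t ^ 10) (t ^ 10) :=
    triple_of_eq (hz 5) n5 (neg_ne_zero.mpr (inv_ne_zero (hz 3))) (by field_simp)
      (by field_simp) (by ring)
  have tA' : th ((t ^ 3)⁻¹) (t ^ 5) = qp (-t ^ 2) (t ^ 10) * qp (-t ^ 8) (t ^ 10) *
      qp (t ^ 10) (t ^ 10) :=
    triple_of_eq (hz 5) n5 (inv_ne_zero (hz 3)) (by field_simp) (by field_simp) (by ring)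
  have tB : th (-(t ^ 1)⁻¹) (t ^ 5) = qp (t ^ 4) (t ^ 10) * qp (t ^ 6) (t ^ 10) *
      qp (t ^ 10) (t ^ 10) :=
    triple_of_eq (hz 5) n5 (neg_ne_zero.mpr (inv_ne_zero (hz 1))) (by field_simp)
      (by field_simp) (by ring)
  have tB' : th ((t ^ 1)⁻¹) (t ^ 5) = qp (-t ^ 4) (t ^ 10) * qp (-t ^ 6) (t ^ 10) *
      qp (t ^ 10) (t ^ 10) :=
    triple_of_eq (hz 5) n5 (inv_ne_zero (hz 1)) (by field_simp) (by field_simp) (by ring)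
  -- theta series of nome `t¹⁰`, i.e. products of base `q¹⁰`
  have ta : ∀ k l : ℕ, k + l = 20 → 10 ≤ k → th (-t ^ (k - 10)) (t ^ 10) =
      qp (t ^ k) (t ^ 20) * qp (t ^ l) (t ^ 20) * qp (t ^ 20) (t ^ 20) := fun k l h hk => by
    obtain ⟨d, rfl⟩ := Nat.exists_eq_add_of_le hk
    refine triple_of_eq (hz 10) n10 (neg_ne_zero.mpr (hz _)) ?_ ?_ (by ring)
    · rw [neg_neg, ← pow_add]; congr 1; omega
    · rw [neg_neg, ← pow_add]; congr 1; omega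
  have t1 := ta 18 2 rfl (by norm_num)
  have t2 := ta 16 4 rfl (by norm_num)
  have t3 := ta 14 6 rfl (by norm_num)
  have t4 := ta 12 8 rfl (by norm_num)
  have t5 : th (-1) (t ^ 10) = qp (t ^ 10) (t ^ 20) * qp (t ^ 10) (t ^ 20) *
      qp (t ^ 20) (t ^ 20) := by simpa using ta 10 10 rfl le_rfl
  norm_num at t1 t2 t3 t4
  have eo := th_mul_even_odd (hz 5) n5 (w := (t ^ 3)⁻¹) (v := -(t ^ 1)⁻¹)
    (inv_ne_zero (hz 3)) (neg_ne_zero.mpr (inv_ne_zero (hz 1)))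
  have eo' := th_mul_even_odd (hz 5) n5 (w := -(t ^ 3)⁻¹) (v := (t ^ 1)⁻¹)
    (neg_ne_zero.mpr (inv_ne_zero (hz 3))) (inv_ne_zero (hz 1))
  have w1 : (t ^ 3)⁻¹ * -(t ^ 1)⁻¹ = (-t ^ 4)⁻¹ := by field_simp
  have w1' : -(t ^ 3)⁻¹ * (t ^ 1)⁻¹ = (-t ^ 4)⁻¹ := by field_simp
  have w2 : (t ^ 3)⁻¹ / -(t ^ 1)⁻¹ = (-t ^ 2)⁻¹ := by field_simp
  have w2' : -(t ^ 3)⁻¹ / (t ^ 1)⁻¹ = (-t ^ 2)⁻¹ := by field_simp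
  have w3 : (-t ^ 4)⁻¹ * (t ^ 5) ^ 2 = -t ^ 6 := by field_simp
  have w4 : (-t ^ 2)⁻¹ * (t ^ 5) ^ 2 = -t ^ 8 := by field_simp
  have w5 : (t ^ 3)⁻¹ * t ^ 5 = t ^ 2 := by field_simp
  have w6 : (t ^ 5) ^ 2 = t ^ 10 := by ring
  rw [w1, w2, w3, w4, w5, w6, th_inv (-t ^ 4), th_inv (-t ^ 2), tA', tB, t1, t2, t3, t4] at eo
  rw [w1', w2', w3, w4, neg_mul (t ^ 3)⁻¹, w5, w6, th_inv (-t ^ 4), th_inv (-t ^ 2), tA, tB', t1, t2, t3, t4] at eo'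
  have hf := theta_sq_sub hq0 hq
  rw [show -(t ^ 2) ^ 4 = -t ^ 8 by ring, show -(t ^ 2) ^ 2 = -t ^ 4 by ring,
    show (t ^ 2) ^ 5 = t ^ 10 by ring, t1, t3] at hf
  -- Passing from base `q⁵` to base `q¹⁰`, by parity of the index and by `x² ↦ (x, -x)`.
  have s1 := qp_even_odd (t ^ 2) n10
  have s2 := qp_even_odd (t ^ 8) n10
  have s3 := qp_even_odd (t ^ 4) n10
  have s4 := qp_even_odd (t ^ 6) n10
  have s5 := qp_even_odd (t ^ 10) n10
  have r1 := qp_sq (t ^ 2) n10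
  have r2 := qp_sq (t ^ 8) n10
  have r3 := qp_sq (t ^ 4) n10
  have r4 := qp_sq (t ^ 6) n10
  simp only [← pow_mul, ← pow_add] at s1 s2 s3 s4 s5 r1 r2 r3 r4
  norm_num at s1 s2 s3 s4 s5 r1 r2 r3 r4
  rw [phi_eq_th, phi_eq_th]
  unfold RR
  simp only [← pow_mul]
  norm_num
  refine final_algebra
    (a1 := qp (t ^ 2) (t ^ 20) * qp (t ^ 18) (t ^ 20))
    (a3 := qp (t ^ 6) (t ^ 20) * qp (t ^ 14) (t ^ 20))
    (A' := qp (-t ^ 2) (t ^ 10) * qp (-t ^ 8) (t ^ 10))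
    (B' := qp (-t ^ 4) (t ^ 10) * qp (-t ^ 6) (t ^ 10))
    (e5 := qp (t ^ 10) (t ^ 10)) (e10 := qp (t ^ 20) (t ^ 20)) (q := t ^ 2)
    ?_ ?_ ?_ ?_ ?_ ?_ ?_ ?_ ?_ ?_ ?_
  · rw [s1, s2]; ring
  · rw [s3, s4]; ring
  · rw [r1, r2]; ring
  · rw [r3, r4]; ring
  · linear_combination eo + eo'
  · linear_combination eo - eo'
  · linear_combination hf
  · rw [t5, s5]; ring
  · exact mul_ne_zero (qp_ne_zero (hn _ (by norm_num)) n20) (qp_ne_zero (hn _ (by norm_num)) n20)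
  · exact mul_ne_zero (qp_ne_zero (hn _ (by norm_num)) n20) (qp_ne_zero (hn _ (by norm_num)) n20)
  · exact qp_ne_zero n10 n10
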